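/- Let H = Z^{2g} with symplectic basis (x_i, y_i) and let A_{g,1} ⊂ H ⊗ L_2(H) be the subgroup {Σ_{i=1}^g (x_i ⊗ [h, y_i] - y_i ⊗ [h, x_i]) : h ∈ H}. Then the composite of ν : Λ^3 H → H ⊗ L_2(H) with the projection onto (H ⊗ L_2(H))/A_{g,1} is injective. -/

import Mathlib

/-- `H = ℤ^{2g}` with basis indexed by `Fin g ⊕ Fin g` (`Sum.inl i = x_i`, `Sum.inr i = y_i`). -/
abbrev Hgrp (g : ℕ) := Fin g ⊕ Fin g → ℤ

/-- The symplectic intersection form `•` on `H`. -/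
def isym (g : ℕ) (a b : Hgrp g) : ℤ :=
  ∑ i : Fin g, (a (Sum.inl i) * b (Sum.inr i) - a (Sum.inr i) * b (Sum.inl i))
/-- The symplectic basis vectors `x_i` of `H`. -/
def xb (g : ℕ) (i : Fin g) : Hgrp g := Pi.single (Sum.inl i) 1

/-- The symplectic basis vectors `y_i` of `H`. -/
def yb (g : ℕ) (i : Fin g) : Hgrp g := Pi.single (Sum.inr i) 1

open scoped TensorProduct

/-- The wedge product `a ∧ b ∧ c` as an element of the third exterior power. -/
noncomputable def wedge3 {R M : Type*} [CommRing R] [AddCommGroup M] [Module R M]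
    (a b c : M) : ⋀[R]^3 M :=
  ⟨ExteriorAlgebra.ιMulti R 3 ![a, b, c],
    ExteriorAlgebra.ιMulti_range R 3 ⟨![a, b, c], rfl⟩⟩

/-- The wedge product `a ∧ b` as an element of the second exterior power. -/
noncomputable def wedge2 {R M : Type*} [CommRing R] [AddCommGroup M] [Module R M]
    (a b : M) : ⋀[R]^2 M :=
  ⟨ExteriorAlgebra.ιMulti R 2 ![a, b],
    ExteriorAlgebra.ιMulti_range R 2 ⟨![a, b], rfl⟩⟩

/-- The subgroup `A_{g,1} = {∑ᵢ (xᵢ ⊗ [h,yᵢ] - yᵢ ⊗ [h,xᵢ]) : h ∈ H}` of `H ⊗ L₂(H)`,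
with `L₂(H)` identified with `Λ²H` via `[x,y] ↔ x∧y`. -/
noncomputable def Ag1 (g : ℕ) : Submodule ℤ (Hgrp g ⊗[ℤ] ⋀[ℤ]^2 (Hgrp g)) :=
  Submodule.span ℤ
    {v | ∃ h : Hgrp g, v = ∑ i : Fin g,
        (xb g i ⊗ₜ wedge2 h (yb g i) - yb g i ⊗ₜ wedge2 h (xb g i))}

/-!
The map `ν` is the component `Λ³M → M ⊗ Λ²M` of the comultiplication of the exterior algebra. By
Laplace expansion, for linear forms `f₀, f₁, f₂` the functional `f₀ ⊗ (f₁ ∧ f₂)` takes the same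
value on `ν t` as `f₀ ∧ f₁ ∧ f₂` does on `t`. Since the latter functionals separate the points of
`Λ³M` for free `M`, the map `ν` is injective; and since `f ∧ f ∧ k = 0`, every `f ⊗ (f ∧ k)` kills
the range of `ν`. On the element of `A_{g,1}` attached to `h`, however, `f ⊗ (f ∧ k)` takes the
value `f h * ω(f, k)`, where `ω = ∑ᵢ xᵢ ∧ yᵢ`. Taking `f` to be a coordinate form and `k` its
symplectic dual recovers each coordinate of `h` up to sign, so the range of `ν` meets `A_{g,1}` only
in `0`.
-/

open Module TensorProduct

section ExteriorComul

variable (R M : Type*) [CommRing R] [AddCommGroup M] [Module R M]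

/-- The component `Λⁿ⁺¹M → M ⊗ ΛⁿM` of the comultiplication of the exterior algebra, sending
`v₀ ∧ ⋯ ∧ vₙ` to `∑ᵢ (-1)ⁱ vᵢ ⊗ (v₀ ∧ ⋯ v̂ᵢ ⋯ ∧ vₙ)`; for `n = 2` it is the map `ν`. -/
noncomputable def exteriorComul (n : ℕ) : ⋀[R]^(n + 1) M →ₗ[R] M ⊗[R] ⋀[R]^n M :=
  exteriorPower.alternatingMapLinearEquiv <| AlternatingMap.alternatizeUncurryFin <|
    exteriorPower.alternatingMapLinearEquiv.symm.toLinearMap ∘ₗ TensorProduct.mk R M (⋀[R]^n M)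

variable {R M}

theorem exteriorComul_ιMulti {n : ℕ} (v : Fin (n + 1) → M) :
    exteriorComul R M n (exteriorPower.ιMulti R (n + 1) v) =
      ∑ i : Fin (n + 1), (-1 : ℤ) ^ (i : ℕ) • v i ⊗ₜ exteriorPower.ιMulti R n (i.removeNth v) := by
  simp [exteriorComul, AlternatingMap.alternatizeUncurryFin_apply]

theorem wedge2_eq_ιMulti (a b : M) :
    wedge2 (R := R) a b = exteriorPower.ιMulti R 2 ![a, b] := rfl

theorem wedge2_swap (a b : M) : wedge2 (R := R) b a = -wedge2 a b := by
  have hswap : ![b, a] = ![a, b] ∘ Equiv.swap 0 1 := by ext i; fin_cases i <;> rfl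
  rw [wedge2_eq_ιMulti, wedge2_eq_ιMulti, hswap, AlternatingMap.map_swap _ _ (by decide)]

theorem exteriorComul_wedge3 (x y z : M) :
    exteriorComul R M 2 (wedge3 x y z) =
      x ⊗ₜ wedge2 y z + y ⊗ₜ wedge2 z x + z ⊗ₜ wedge2 x y := by
  have h₀ : Fin.removeNth 0 ![x, y, z] = ![y, z] := by ext i; fin_cases i <;> rfl
  have h₁ : Fin.removeNth 1 ![x, y, z] = ![x, z] := by ext i; fin_cases i <;> rfl
  have h₂ : Fin.removeNth 2 ![x, y, z] = ![x, y] := by ext i; fin_cases i <;> rfl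
  calc
    _ = ∑ i : Fin 3, (-1 : ℤ) ^ (i : ℕ) •
          ![x, y, z] i ⊗ₜ exteriorPower.ιMulti R 2 (i.removeNth ![x, y, z]) :=
      exteriorComul_ιMulti ![x, y, z]
    _ = x ⊗ₜ wedge2 y z - y ⊗ₜ wedge2 x z + z ⊗ₜ wedge2 x y := by
      simp [Fin.sum_univ_three, h₀, h₁, h₂, wedge2_eq_ιMulti, sub_eq_add_neg]
    _ = _ := by rw [wedge2_swap z x, tmul_neg, sub_neg_eq_add]

/-- The linear form `f₀ ⊗ (f₁ ∧ ⋯ ∧ fₙ)` on `M ⊗ ΛⁿM`, used to test elements of `M ⊗ ΛⁿM`; the wedge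
of forms acts on `ΛⁿM` by the determinant pairing. -/
noncomputable def dualTmulWedge {n : ℕ} (f₀ : Dual R M) (f : Fin n → Dual R M) :
    Dual R (M ⊗[R] ⋀[R]^n M) :=
  dualDistrib R M (⋀[R]^n M)
    (f₀ ⊗ₜ exteriorPower.pairingDual R M n (exteriorPower.ιMulti R n f))

theorem dualTmulWedge_tmul_ιMulti {n : ℕ} (f₀ : Dual R M) (f : Fin n → Dual R M) (a : M)
    (v : Fin n → M) :
    dualTmulWedge f₀ f (a ⊗ₜ exteriorPower.ιMulti R n v) =
      f₀ a * (Matrix.of fun i j ↦ f j (v i)).det := by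
  rw [dualTmulWedge, dualDistrib_apply, exteriorPower.pairingDual_ιMulti_ιMulti]

theorem dualTmulWedge_exteriorComul {n : ℕ} (f₀ : Dual R M) (f : Fin n → Dual R M)
    (t : ⋀[R]^(n + 1) M) :
    dualTmulWedge f₀ f (exteriorComul R M n t) =
      exteriorPower.pairingDual R M (n + 1)
        (exteriorPower.ιMulti R (n + 1) (Matrix.vecCons f₀ f)) t := by
  suffices dualTmulWedge f₀ f ∘ₗ exteriorComul R M n = exteriorPower.pairingDual R M (n + 1)
      (exteriorPower.ιMulti R (n + 1) (Matrix.vecCons f₀ f)) from LinearMap.congr_fun this t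
  ext v
  simp only [LinearMap.compAlternatingMap_apply, LinearMap.comp_apply, exteriorComul_ιMulti,
    map_sum, map_zsmul, dualTmulWedge_tmul_ιMulti, exteriorPower.pairingDual_ιMulti_ιMulti,
    Matrix.det_succ_column_zero]
  refine Finset.sum_congr rfl fun i _ ↦ ?_
  rw [zsmul_eq_mul, Int.cast_pow, Int.cast_neg, Int.cast_one, mul_assoc]
  rfl

theorem eq_zero_of_pairingDual_ιMulti_eq_zero [Free R M] {n : ℕ} {t : ⋀[R]^n M}
    (h : ∀ f : Fin n → Dual R M,
      exteriorPower.pairingDual R M n (exteriorPower.ιMulti R n f) t = 0) : t = 0 := by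
  classical
  let _ : LinearOrder (Free.ChooseBasisIndex R M) := linearOrderOfSTO WellOrderingRel
  refine ((Free.chooseBasis R M).exteriorPower n).ext_elem fun s ↦ ?_
  rw [exteriorPower.basis_repr_apply, map_zero]
  exact h ((Free.chooseBasis R M).coord ∘ Set.powersetCard.ofFinEmbEquiv.symm s)

theorem exteriorComul_injective [Free R M] (n : ℕ) :
    Function.Injective (exteriorComul R M n) := by
  refine (injective_iff_map_eq_zero _).mpr fun t ht ↦
    eq_zero_of_pairingDual_ιMulti_eq_zero fun f ↦ ?_
  rw [← Matrix.cons_head_tail f, ← dualTmulWedge_exteriorComul, ht, map_zero]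

theorem dualTmulWedge_exteriorComul_eq_zero {n : ℕ} (f : Fin n → Dual R M) (i : Fin n)
    (t : ⋀[R]^(n + 1) M) : dualTmulWedge (f i) f (exteriorComul R M n t) = 0 := by
  rw [dualTmulWedge_exteriorComul, AlternatingMap.map_eq_zero_of_eq (i := 0) (j := i.succ) _ _
    (by simp) (Fin.succ_ne_zero i).symm, map_zero, LinearMap.zero_apply]

end ExteriorComul

section InnerDerivation

variable {R M ι : Type*} [CommRing R] [AddCommGroup M] [Module R M] [Fintype ι]

/-- The element `∑ᵢ (xᵢ ⊗ [h, yᵢ] - yᵢ ⊗ [h, xᵢ])` of `M ⊗ L₂(M)`, with `L₂(M)` encoded as `Λ²M`.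
When `(xᵢ, yᵢ)` is a symplectic basis it corresponds to the inner derivation `[h, ·]` under the
identification `M ⊗ L₂(M) ≃ Hom(M, L₂(M))` given by the symplectic form. -/
noncomputable def innerDerivation (x y : ι → M) : M →ₗ[R] M ⊗[R] ⋀[R]^2 M where
  toFun h := ∑ i, (x i ⊗ₜ wedge2 h (y i) - y i ⊗ₜ wedge2 h (x i))
  map_add' h h' := by
    have hadd (a : M) : wedge2 (R := R) (h + h') a = wedge2 h a + wedge2 h' a :=
      (exteriorPower.ιMulti R 2).map_vecCons_add ![a] h h'
    simp only [hadd, tmul_add, add_sub_add_comm, Finset.sum_add_distrib]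
  map_smul' c h := by
    have hsmul (a : M) : wedge2 (R := R) (c • h) a = c • wedge2 h a :=
      (exteriorPower.ιMulti R 2).map_vecCons_smul ![a] c h
    simp only [hsmul, tmul_smul, ← smul_sub, ← Finset.smul_sum, RingHom.id_apply]

theorem span_eq_range_innerDerivation (x y : ι → M) :
    Submodule.span R {v | ∃ h : M, v = ∑ i, (x i ⊗ₜ wedge2 h (y i) - y i ⊗ₜ wedge2 h (x i))} =
      LinearMap.range (innerDerivation (R := R) x y) := by
  rw [← Submodule.span_eq (LinearMap.range _)]
  congr 1
  ext v
  exact exists_congr fun h ↦ eq_comm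

theorem dualTmulWedge_tmul_wedge2 (f₀ f k : Dual R M) (a b c : M) :
    dualTmulWedge f₀ ![f, k] (a ⊗ₜ wedge2 b c) = f₀ a * (f b * k c - k b * f c) := by
  simp [wedge2_eq_ιMulti, dualTmulWedge_tmul_ιMulti, Matrix.det_fin_two]

theorem dualTmulWedge_innerDerivation (x y : ι → M) (f k : Dual R M) (h : M) :
    dualTmulWedge f ![f, k] (innerDerivation x y h) =
      f h * ∑ i, (f (x i) * k (y i) - f (y i) * k (x i)) := by
  simp only [innerDerivation, LinearMap.coe_mk, AddHom.coe_mk, map_sum, map_sub,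
    dualTmulWedge_tmul_wedge2, Finset.mul_sum]
  exact Finset.sum_congr rfl fun i _ ↦ by ring

theorem eq_zero_of_innerDerivation_eq_exteriorComul (b : Basis (ι ⊕ ι) R M) {h : M}
    {t : ⋀[R]^3 M}
    (ht : innerDerivation (b ∘ Sum.inl) (b ∘ Sum.inr) h = exteriorComul R M 2 t) : h = 0 := by
  classical
  have hmul (f k : Dual R M) :
      f h * ∑ i, (f (b (.inl i)) * k (b (.inr i)) - f (b (.inr i)) * k (b (.inl i))) = 0 := by
    refine (dualTmulWedge_innerDerivation (b ∘ Sum.inl) (b ∘ Sum.inr) f k h).symm.trans ?_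
    rw [ht]
    exact dualTmulWedge_exteriorComul_eq_zero ![f, k] 0 t
  refine b.ext_elem fun j ↦ ?_
  rcases j with j | j
  · simpa [Finsupp.single_apply] using hmul (b.coord (.inl j)) (b.coord (.inr j))
  · simpa [Finsupp.single_apply] using hmul (b.coord (.inr j)) (b.coord (.inl j))

end InnerDerivation

theorem nu_mod_Ag1_injective_general {R M ι : Type*} [CommRing R] [AddCommGroup M] [Module R M]
    [Fintype ι] (b : Basis (ι ⊕ ι) R M) :
    ∃ ν : ⋀[R]^3 M →ₗ[R] M ⊗[R] ⋀[R]^2 M,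
      (∀ x y z : M, ν (wedge3 x y z)
          = x ⊗ₜ wedge2 y z + y ⊗ₜ wedge2 z x + z ⊗ₜ wedge2 x y) ∧
      Function.Injective ((Submodule.span R
        {v | ∃ h : M, v = ∑ i : ι, (b (.inl i) ⊗ₜ wedge2 h (b (.inr i))
          - b (.inr i) ⊗ₜ wedge2 h (b (.inl i)))}).mkQ ∘ₗ ν) := by
  have := Free.of_basis b
  refine ⟨exteriorComul R M 2, exteriorComul_wedge3,
    (injective_iff_map_eq_zero _).mpr fun t ht ↦ ?_⟩
  obtain ⟨h, hh⟩ : exteriorComul R M 2 t ∈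
      LinearMap.range (innerDerivation (b ∘ Sum.inl) (b ∘ Sum.inr)) := by
    rw [← span_eq_range_innerDerivation]
    exact (Submodule.Quotient.mk_eq_zero _).mp ht
  obtain rfl : h = 0 := eq_zero_of_innerDerivation_eq_exteriorComul b hh
  apply exteriorComul_injective 2
  rw [← hh, map_zero, map_zero]

theorem Ag1_eq_span_basisFun (g : ℕ) :
    letI b := Pi.basisFun ℤ (Fin g ⊕ Fin g)
    Ag1 g = Submodule.span ℤ {v | ∃ h : Hgrp g, v = ∑ i : Fin g,
      (b (.inl i) ⊗ₜ wedge2 h (b (.inr i)) - b (.inr i) ⊗ₜ wedge2 h (b (.inl i)))} := by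
  simp only [Ag1, xb, yb, Pi.basisFun_apply]

/-- The composite of `ν : Λ³H → H ⊗ L₂(H)` with the projection onto
`(H ⊗ L₂(H))/A_{g,1}` is injective. -/
theorem nu_mod_Ag1_injective (g : ℕ) :
    ∃ ν : ⋀[ℤ]^3 (Hgrp g) →ₗ[ℤ] Hgrp g ⊗[ℤ] ⋀[ℤ]^2 (Hgrp g),
      (∀ x y z : Hgrp g, ν (wedge3 x y z)
          = x ⊗ₜ wedge2 y z + y ⊗ₜ wedge2 z x + z ⊗ₜ wedge2 x y) ∧
      Function.Injective ((Ag1 g).mkQ ∘ₗ ν) := by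
  rw [Ag1_eq_span_basisFun]
  exact nu_mod_Ag1_injective_general (Pi.basisFun ℤ (Fin g ⊕ Fin g))
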